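/- For all x, y ∈ S, if d[l](x,y) = 0 then x = y. -/

import Mathlib

noncomputable section

open Set
open scoped ENNReal

/-- The Euclidean plane `ℝ²` with the Euclidean metric. -/
abbrev E2 : Type := EuclideanSpace ℝ (Fin 2)

/-- Vertices of the fixed closed regular (equilateral) triangle of side length 1. -/
def p0 : E2 := !₂[0, 0]
def p1 : E2 := !₂[1, 0]
def p2 : E2 := !₂[1 / 2, Real.sqrt 3 / 2]

/-- `Dtri` is the fixed closed regular triangle in `ℝ²` with edge length 1. -/
def Dtri : Set E2 := convexHull ℝ {p0, p1, p2}

/-- `V0` is the set of the three vertices of `Dtri`. -/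
def V0 : Set E2 := {p0, p1, p2}

/-- The three closed edges of `Dtri`. -/
def e01 : Set E2 := segment ℝ p0 p1
def e12 : Set E2 := segment ℝ p1 p2
def e02 : Set E2 := segment ℝ p0 p2

/-- `E0` is the set of the three closed edges of `Dtri`. -/
def E0 : Set (Set E2) := {e01, e12, e02}

/-- The open edge `e° = e ∖ V₀`. -/
def eo (e : Set E2) : Set E2 := e \ V0

/-- `Do = D°` is the interior of `Dtri` in `ℝ²`. -/
def Do : Set E2 := interior Dtri

/-- `l : E₀ → ℝ` is positive and satisfies the strict triangle inequalities:
`l e₁ + l e₂ > l e₃` whenever `{e₁, e₂, e₃} = E₀`. -/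
def TriIneq (l : Set E2 → ℝ) : Prop :=
  (∀ e ∈ E0, 0 < l e) ∧
  ∀ e₁ e₂ e₃ : Set E2, ({e₁, e₂, e₃} : Set (Set E2)) = E0 → l e₁ + l e₂ > l e₃

/-- A linear map `f : ℝ² → ℝ²` realizes the edge lengths `l`, i.e. for each `e ∈ E₀`
the segment `f(e)` has Euclidean length `l e`. -/
def Realizes (f : E2 →ₗ[ℝ] E2) (l : Set E2 → ℝ) : Prop :=
  dist (f p0) (f p1) = l e01 ∧ dist (f p1) (f p2) = l e12 ∧ dist (f p0) (f p2) = l e02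

/-- The metric `d[l]` on `Dtri`, defined by `d[l](x,y) = |f x - f y|₂` for a linear map `f`
realizing the edge lengths `l` (this is independent of the choice of `f`). -/
def dD (l : Set E2 → ℝ) (x y : E2) : ℝ :=
  letI := Classical.propDecidable (∃ f : E2 →ₗ[ℝ] E2, Realizes f l)
  if h : ∃ f : E2 →ₗ[ℝ] E2, Realizes f l then dist (h.choose x) (h.choose y) else 0

/-- A triangulation `T = (σᵢ)_{i ∈ I}`, `I = Fin n`, of a topological space `S`:
a finite family of continuous maps `σᵢ : Dtri → S` such that
(a) `σᵢ` is injective on each open edge, (b) `σᵢ` is injective on `D°`,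
(c) `S` is the disjoint union of `⋃ᵢ σᵢ(V₀)`, the sets `σᵢ(D°)`, and the distinct sets
among the `σᵢ(e°)`, and (d) glued edges are identified by a linear homeomorphism. -/
structure Triangulation (S : Type) [TopologicalSpace S] (n : ℕ) where
  σ : Fin n → E2 → S
  continuousOn : ∀ i, ContinuousOn (σ i) Dtri
  inj_edge : ∀ i, ∀ e ∈ E0, InjOn (σ i) (eo e)
  inj_int : ∀ i, InjOn (σ i) Do
  cover : (⋃ i, σ i '' V0) ∪ (⋃ i, σ i '' Do) ∪ (⋃ i, ⋃ e ∈ E0, σ i '' eo e) = univ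
  disj_int : ∀ i j, i ≠ j → Disjoint (σ i '' Do) (σ j '' Do)
  disj_vert_int : ∀ j, Disjoint (⋃ i, σ i '' V0) (σ j '' Do)
  disj_vert_edge : ∀ j, ∀ e ∈ E0, Disjoint (⋃ i, σ i '' V0) (σ j '' eo e)
  disj_int_edge : ∀ i j, ∀ e ∈ E0, Disjoint (σ i '' Do) (σ j '' eo e)
  edge_eq_or_disjoint : ∀ i j, ∀ e ∈ E0, ∀ e' ∈ E0,
    σ i '' eo e = σ j '' eo e' ∨ Disjoint (σ i '' eo e) (σ j '' eo e')
  glue : ∀ i j, ∀ e ∈ E0, ∀ e' ∈ E0, σ i '' eo e = σ j '' eo e' →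
    ∃ A : E2 →ᵃ[ℝ] E2, A '' e = e' ∧ ∀ x ∈ e, σ j (A x) = σ i x

variable {S : Type} [TopologicalSpace S] {n : ℕ}

/-- `l ∈ ℝ^{E(T)}_Δ`: `l` assigns positive lengths to the edges of `T` satisfying the
strict triangle inequalities in each triangle. -/
def TriIneqT (T : Triangulation S n) (l : Set S → ℝ) : Prop :=
  (∀ (i : Fin n), ∀ e ∈ E0, 0 < l (T.σ i '' e)) ∧
  ∀ (i : Fin n), ∀ e₁ e₂ e₃ : Set E2, ({e₁, e₂, e₃} : Set (Set E2)) = E0 →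
    l (T.σ i '' e₁) + l (T.σ i '' e₂) > l (T.σ i '' e₃)

/-- The restricted edge lengths `l^{(i)}` on the triangle `σᵢ(D)`: `l^{(i)}_e = l_{σᵢ(e)}`. -/
def lRes (T : Triangulation S n) (l : Set S → ℝ) (i : Fin n) : Set E2 → ℝ :=
  fun e => l (T.σ i '' e)

/-- `dᵢ(x,y) = min { d[l^{(i)}](x',y') : x' ∈ σᵢ⁻¹(x), y' ∈ σᵢ⁻¹(y) }` for `x, y ∈ σᵢ(D)`. -/
def dTri (T : Triangulation S n) (l : Set S → ℝ) (i : Fin n) (x y : S) : ℝ :=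
  sInf { r | ∃ x' ∈ Dtri, ∃ y' ∈ Dtri,
    T.σ i x' = x ∧ T.σ i y' = y ∧ r = dD (lRes T l i) x' y' }

/-- The set of sums `Σ_j d_{i_j}(x_{j-1}, x_j)` over chains from `x` to `y`. -/
def chainSums (T : Triangulation S n) (l : Set S → ℝ) (x y : S) : Set ℝ :=
  { r | ∃ (k : ℕ) (c : ℕ → S) (idx : ℕ → Fin n),
      c 0 = x ∧ c k = y ∧
      (∀ j < k, c j ∈ T.σ (idx j) '' Dtri ∧ c (j + 1) ∈ T.σ (idx j) '' Dtri) ∧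
      r = ∑ j ∈ Finset.range k, dTri T l (idx j) (c j) (c (j + 1)) }

/-- The glued metric `d[l]` on `S`. -/
def dGlue (T : Triangulation S n) (l : Set S → ℝ) (x y : S) : ℝ :=
  sInf (chainSums T l x y)

/-!
Fix `x`. It has only finitely many preimages `f` in the triangles, so there is `r > 0` such that a
closed face of `D` containing a point within `r` of a preimage `f` contains `f` itself. Faces are
glued isometrically for the Euclidean metric of `D`, so when a point of one triangle is at distance
`t < r` from a preimage of `x`, every other point glued to it is at distance `t` from some preimage
of `x` in its own triangle. Since each `d[l⁽ⁱ⁾]` dominates `m` times the Euclidean metric, induction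
along a chain from `x` of total length `s < m r` shows that every preimage of its endpoint is
within `s / m` of a preimage of `x`. If `d[l](x, y) = 0`, then a preimage of `y` is in the closure
of the finite set of preimages of `x`.
-/

open Filter Topology

section General

lemma exists_pos_forall_dist_lt_imp_mem {X : Type*} [PseudoMetricSpace X] {F : Set X}
    (hF : F.Finite) {𝒞 : Set (Set X)} (h𝒞 : 𝒞.Finite) (hclosed : ∀ C ∈ 𝒞, IsClosed C) :
    ∃ r > 0, ∀ f ∈ F, ∀ C ∈ 𝒞, ∀ q ∈ C, dist q f < r → f ∈ C := by
  have hlocal : ∀ f ∈ F, ∀ C ∈ 𝒞, ∀ᶠ r in 𝓝[>] (0 : ℝ), ∀ q ∈ C, dist q f < r → f ∈ C := by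
    intro f _ C hC
    by_cases hfC : f ∈ C
    · exact .of_forall fun _ _ _ _ => hfC
    obtain ⟨ε, hε, hball⟩ := Metric.isOpen_iff.1 (hclosed C hC).isOpen_compl f hfC
    filter_upwards [Ioo_mem_nhdsGT hε] with r hr q hq hqf
    exact absurd hq (hball (hqf.trans hr.2))
  have hall := (eventually_all_finite hF).2 fun f hf =>
    (eventually_all_finite h𝒞).2 (hlocal f hf)
  exact (eventually_mem_nhdsWithin.and hall).exists

lemma eq_univ_of_finite_closed_cover {X ι : Type*} [TopologicalSpace X] [PreconnectedSpace X]
    [Finite ι] {K : ι → Set X} (hK : ∀ i, IsClosed (K i)) (hcover : ∀ x, ∃ i, x ∈ K i)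
    {C : Set X} (hne : C.Nonempty) (hC : ∀ i, ∀ u ∈ K i, ∀ v ∈ K i, u ∈ C → v ∈ C) :
    C = univ := by
  have closed_of_saturated : ∀ B : Set X, (∀ i, ∀ u ∈ K i, ∀ v ∈ K i, u ∈ B → v ∈ B) →
      IsClosed B := by
    intro B hB
    have hunion : B = ⋃ i ∈ {i | (K i ∩ B).Nonempty}, K i := by
      refine Subset.antisymm (fun z hz => ?_) (iUnion₂_subset fun i ⟨u, hu, huB⟩ v hv => ?_)
      · obtain ⟨i, hi⟩ := hcover z
        exact mem_biUnion ⟨z, hi, hz⟩ hi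
      · exact hB i u hu v hv huB
    rw [hunion]
    exact (toFinite _).isClosed_biUnion fun i _ => hK i
  have hcompl : IsClosed Cᶜ :=
    closed_of_saturated Cᶜ fun i u hu v hv huC hvC => huC (hC i v hv u hu hvC)
  exact IsClopen.eq_univ ⟨closed_of_saturated C hC, isClosed_compl_iff.1 hcompl⟩ hne

variable {V W : Type*} [SeminormedAddCommGroup V] [NormedSpace ℝ V]
  [SeminormedAddCommGroup W] [NormedSpace ℝ W]

lemma diam_segment_eq_dist (p q : V) : Metric.diam (segment ℝ p q) = dist p q := by
  rw [← convexHull_pair, convexHull_diam, Metric.diam_pair]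

lemma dist_map_eq_of_image_segment_eq (A : V →ᵃ[ℝ] W) {p q : V} {p' q' : W}
    (hA : A '' segment ℝ p q = segment ℝ p' q') (hpq : dist p q = dist p' q') {x y : V}
    (hx : x ∈ segment ℝ p q) (hy : y ∈ segment ℝ p q) : dist (A x) (A y) = dist x y := by
  have hends : dist (A p) (A q) = dist p q := by
    rw [hpq, ← diam_segment_eq_dist, ← diam_segment_eq_dist, ← image_segment, hA]
  rw [segment_eq_image_lineMap] at hx hy
  obtain ⟨s, -, rfl⟩ := hx
  obtain ⟨t, -, rfl⟩ := hy
  simp only [AffineMap.apply_lineMap, dist_lineMap_lineMap, hends]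

lemma linearIndependent_pair_of_norm_lt {x y : V} (hxy : ‖x - y‖ < ‖x‖ + ‖y‖)
    (hx : ‖x‖ < ‖x - y‖ + ‖y‖) (hy : ‖y‖ < ‖x - y‖ + ‖x‖) : LinearIndependent ℝ ![x, y] := by
  by_contra hdep
  rcases sameRay_or_sameRay_neg_iff_not_linearIndependent.2 hdep with hray | hray
  · have := hray.norm_sub
    rcases abs_cases (‖x‖ - ‖y‖) with h | h <;> linarith
  · have := hray.norm_add
    rw [← sub_eq_add_neg, norm_neg] at this
    linarith

lemma affineIndependent_zero_pair {k M : Type*} [Ring k] [AddCommGroup M] [Module k M] {x y : M}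
    (h : LinearIndependent k ![x, y]) : AffineIndependent k ![0, x, y] := by
  refine (affineIndependent_iff_of_fintype k _).2 fun w hw hcomb => ?_
  rw [Finset.univ.weightedVSub_eq_linear_combination hw] at hcomb
  simp only [Fin.sum_univ_three, Matrix.cons_val, smul_zero, zero_add] at hw hcomb
  obtain ⟨h₁, h₂⟩ := LinearIndependent.pair_iff.1 h _ _ hcomb
  have h₀ : w 0 = 0 := by simpa only [h₁, h₂, add_zero] using hw
  intro i
  fin_cases i <;> assumption

lemma exists_norm_eq_norm_sub_eq_norm_eq {a b c : ℝ} (ha : 0 < a) (hca : c ≤ a + b)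
    (hab : a ≤ b + c) (hba : b ≤ a + c) :
    ∃ P Q : EuclideanSpace ℝ (Fin 2), ‖P‖ = a ∧ ‖P - Q‖ = b ∧ ‖Q‖ = c := by
  -- The law of cosines gives the projection `u` of `Q` onto the line of `P`.
  set u : ℝ := (a ^ 2 + c ^ 2 - b ^ 2) / (2 * a) with hu
  have heron : c ^ 2 - u ^ 2 =
      ((a + b + c) * (a + c - b) * (b + c - a) * (a + b - c)) / (2 * a) ^ 2 := by
    rw [hu]; field_simp; ring
  have hnonneg : 0 ≤ c ^ 2 - u ^ 2 := by
    have _ : 0 ≤ a + c - b := by linarith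
    have _ : 0 ≤ b + c - a := by linarith
    have _ : 0 ≤ a + b - c := by linarith
    have _ : 0 ≤ a + b + c := by linarith
    rw [heron]; positivity
  have hcos : (a - u) ^ 2 + (c ^ 2 - u ^ 2) = b ^ 2 := by rw [hu]; field_simp; ring
  refine ⟨!₂[a, 0], !₂[u, √(c ^ 2 - u ^ 2)], ?_, ?_, ?_⟩
  · simp [EuclideanSpace.norm_eq, ha.le]
  · have : 0 ≤ b := by linarith
    simp [EuclideanSpace.norm_eq, Real.sq_sqrt hnonneg, hcos, this]
  · have : 0 ≤ c := by linarith
    simp [EuclideanSpace.norm_eq, Real.sq_sqrt hnonneg, this]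

end General

section ModelTriangle

lemma p0_eq_zero : p0 = 0 := by
  ext i; fin_cases i <;> simp [p0]

lemma norm_p1 : ‖p1‖ = 1 := by
  simp [p1, EuclideanSpace.norm_eq]

lemma norm_p2 : ‖p2‖ = 1 := by
  norm_num [p2, EuclideanSpace.norm_eq, div_pow]

lemma norm_p1_sub_p2 : ‖p1 - p2‖ = 1 := by
  norm_num [p1, p2, EuclideanSpace.norm_eq, div_pow]

lemma linearIndependent_p1_p2 : LinearIndependent ℝ ![p1, p2] := by
  apply linearIndependent_pair_of_norm_lt <;> rw [norm_p1, norm_p2, norm_p1_sub_p2] <;> norm_num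

/-- The basis `p1, p2` of the plane: as `p0 = 0`, a linear map on the plane is determined by the
image of the triangle, and can take any values on the vertices `p1` and `p2`. -/
def vertexBasis : Module.Basis (Fin 2) ℝ E2 :=
  basisOfLinearIndependentOfCardEqFinrank linearIndependent_p1_p2 (by simp)

@[simp]
lemma coe_vertexBasis : ⇑vertexBasis = ![p1, p2] :=
  coe_basisOfLinearIndependentOfCardEqFinrank _ _

lemma vertexBasis_constr_apply (P Q : E2) :
    vertexBasis.constr ℝ ![P, Q] p1 = P ∧ vertexBasis.constr ℝ ![P, Q] p2 = Q :=
  ⟨by simpa using vertexBasis.constr_basis ℝ ![P, Q] 0,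
    by simpa using vertexBasis.constr_basis ℝ ![P, Q] 1⟩

/-- The vertices of `Dtri` as an affine basis: the interior and the edges of `Dtri` are read off
its coordinates, the barycentric coordinates. -/
def vertexAffineBasis : AffineBasis (Fin 3) ℝ E2 where
  toFun := ![p0, p1, p2]
  ind' := p0_eq_zero ▸ affineIndependent_zero_pair linearIndependent_p1_p2
  tot' := by
    have h : AffineIndependent ℝ ![p0, p1, p2] :=
      p0_eq_zero ▸ affineIndependent_zero_pair linearIndependent_p1_p2
    exact h.affineSpan_eq_top_iff_card_eq_finrank_add_one.2 (by simp)

@[simp]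
lemma coe_vertexAffineBasis : ⇑vertexAffineBasis = ![p0, p1, p2] := rfl

lemma Dtri_eq_convexHull_range : Dtri = convexHull ℝ (range vertexAffineBasis) := by
  simp only [Dtri, coe_vertexAffineBasis, Matrix.range_cons, Matrix.range_empty, union_empty,
    singleton_union]

lemma isCompact_Dtri : IsCompact Dtri :=
  (toFinite {p0, p1, p2}).isCompact_convexHull ℝ

lemma V0_subset_Dtri : V0 ⊆ Dtri := subset_convexHull ℝ _

lemma exists_eq_segment_of_mem_E0 {e : Set E2} (he : e ∈ E0) :
    ∃ p ∈ V0, ∃ q ∈ V0, e = segment ℝ p q ∧ dist p q = 1 := by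
  rcases he with rfl | rfl | rfl
  · exact ⟨p0, by simp [V0], p1, by simp [V0], rfl, by simp [p0_eq_zero, norm_p1]⟩
  · exact ⟨p1, by simp [V0], p2, by simp [V0], rfl, by rw [dist_eq_norm, norm_p1_sub_p2]⟩
  · exact ⟨p0, by simp [V0], p2, by simp [V0], rfl, by simp [p0_eq_zero, norm_p2]⟩

lemma subset_Dtri_of_mem_E0 {e : Set E2} (he : e ∈ E0) : e ⊆ Dtri := by
  obtain ⟨p, hp, q, hq, rfl, -⟩ := exists_eq_segment_of_mem_E0 he
  exact (convex_convexHull ℝ _).segment_subset (V0_subset_Dtri hp) (V0_subset_Dtri hq)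

lemma isClosed_of_mem_E0 {e : Set E2} (he : e ∈ E0) : IsClosed e := by
  obtain ⟨p, -, q, -, rfl, -⟩ := exists_eq_segment_of_mem_E0 he
  exact convexHull_pair (𝕜 := ℝ) p q ▸ (toFinite {p, q}).isClosed_convexHull ℝ

lemma dist_map_eq_of_image_edge_eq {e e' : Set E2} (he : e ∈ E0) (he' : e' ∈ E0)
    {A : E2 →ᵃ[ℝ] E2} (hA : A '' e = e') {x y : E2} (hx : x ∈ e) (hy : y ∈ e) :
    dist (A x) (A y) = dist x y := by
  obtain ⟨p, -, q, -, rfl, hpq⟩ := exists_eq_segment_of_mem_E0 he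
  obtain ⟨p', -, q', -, rfl, hpq'⟩ := exists_eq_segment_of_mem_E0 he'
  exact dist_map_eq_of_image_segment_eq A hA (hpq.trans hpq'.symm) hx hy

lemma mem_Do_or_exists_mem_edge {x : E2} (hx : x ∈ Dtri) : x ∈ Do ∨ ∃ e ∈ E0, x ∈ e := by
  have hnonneg : ∀ i, 0 ≤ vertexAffineBasis.coord i x := by
    rwa [Dtri_eq_convexHull_range, vertexAffineBasis.convexHull_eq_nonneg_coord] at hx
  by_cases hpos : ∀ i, 0 < vertexAffineBasis.coord i x
  · left
    rwa [Do, Dtri_eq_convexHull_range, vertexAffineBasis.interior_convexHull]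
  right
  push Not at hpos
  obtain ⟨i, hi⟩ := hpos
  have hi₀ : vertexAffineBasis.coord i x = 0 := le_antisymm hi (hnonneg i)
  have hsum := vertexAffineBasis.sum_coord_apply_eq_one x
  have hx := vertexAffineBasis.linear_combination_coord_eq_self x
  simp only [Fin.sum_univ_three, coe_vertexAffineBasis, Matrix.cons_val] at hsum hx
  fin_cases i <;> simp only [Fin.zero_eta, Fin.mk_one, Fin.reduceFinMk] at hi₀ <;>
    simp only [hi₀, zero_add, add_zero, zero_smul] at hsum hx
  · exact ⟨e12, by simp [E0], _, _, hnonneg 1, hnonneg 2, hsum, hx⟩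
  · exact ⟨e02, by simp [E0], _, _, hnonneg 0, hnonneg 2, hsum, hx⟩
  · exact ⟨e01, by simp [E0], _, _, hnonneg 0, hnonneg 1, hsum, hx⟩

lemma mem_V0_or_mem_Do_or_exists_mem_eo {x : E2} (hx : x ∈ Dtri) :
    x ∈ V0 ∨ x ∈ Do ∨ ∃ e ∈ E0, x ∈ eo e := by
  by_cases hV : x ∈ V0
  · exact .inl hV
  · exact .inr ((mem_Do_or_exists_mem_edge hx).imp_right fun ⟨e, he, hxe⟩ => ⟨e, he, hxe, hV⟩)

/-- The closed faces of `Dtri` of all dimensions, as subsets of the plane: the triangle itself,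
its edges and its vertices. They allow the three kinds of gluing to be treated uniformly. -/
def closedFaces : Set (Set E2) := insert Dtri (E0 ∪ singleton '' V0)

lemma finite_V0 : V0.Finite := toFinite {p0, p1, p2}

lemma finite_E0 : E0.Finite := toFinite {e01, e12, e02}

lemma finite_closedFaces : closedFaces.Finite :=
  (finite_E0.union (finite_V0.image _)).insert _

lemma isClosed_of_mem_closedFaces {C : Set E2} (hC : C ∈ closedFaces) : IsClosed C := by
  rcases hC with rfl | hC | ⟨v, -, rfl⟩
  · exact isCompact_Dtri.isClosed
  · exact isClosed_of_mem_E0 hC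
  · exact isClosed_singleton

end ModelTriangle

section TriangleMetric

variable {l : Set E2 → ℝ}

lemma dD_nonneg (l : Set E2 → ℝ) (x y : E2) : 0 ≤ dD l x y := by
  unfold dD
  split_ifs
  · exact dist_nonneg
  · exact le_rfl

lemma TriIneq.side_lt_add (hl : TriIneq l) :
    l e02 < l e01 + l e12 ∧ l e12 < l e01 + l e02 ∧ l e01 < l e12 + l e02 :=
  ⟨hl.2 e01 e12 e02 rfl, hl.2 e01 e02 e12 (by rw [E0, pair_comm]),
    hl.2 e12 e02 e01 (by rw [E0, pair_comm e02, insert_comm])⟩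

lemma realizes_iff {f : E2 →ₗ[ℝ] E2} :
    Realizes f l ↔ ‖f p1‖ = l e01 ∧ ‖f p1 - f p2‖ = l e12 ∧ ‖f p2‖ = l e02 := by
  simp only [Realizes, p0_eq_zero, map_zero, dist_zero_left, dist_eq_norm (f p1)]

lemma TriIneq.exists_realizes (hl : TriIneq l) : ∃ f : E2 →ₗ[ℝ] E2, Realizes f l := by
  obtain ⟨h₁, h₂, h₃⟩ := hl.side_lt_add
  obtain ⟨P, Q, hP, hPQ, hQ⟩ :=
    exists_norm_eq_norm_sub_eq_norm_eq (hl.1 e01 (by simp [E0])) h₁.le h₃.le h₂.le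
  obtain ⟨hp1, hp2⟩ := vertexBasis_constr_apply P Q
  exact ⟨vertexBasis.constr ℝ ![P, Q], realizes_iff.2 (by rw [hp1, hp2]; exact ⟨hP, hPQ, hQ⟩)⟩

lemma Realizes.injective (hl : TriIneq l) {f : E2 →ₗ[ℝ] E2} (hf : Realizes f l) :
    Function.Injective f := by
  obtain ⟨h₁, h₂, h₃⟩ := hl.side_lt_add
  obtain ⟨hP, hPQ, hQ⟩ := realizes_iff.1 hf
  have hindep : LinearIndependent ℝ ![f p1, f p2] := by
    apply linearIndependent_pair_of_norm_lt <;> rw [hP, hPQ, hQ] <;> linarith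
  have hconstr : vertexBasis.constr ℝ ![f p1, f p2] = f :=
    vertexBasis.ext fun i => by
      rw [coe_vertexBasis]
      fin_cases i
      exacts [(vertexBasis_constr_apply _ _).1, (vertexBasis_constr_apply _ _).2]
  exact hconstr ▸ vertexBasis.injective_constr_of_linearIndependent hindep

lemma TriIneq.exists_pos_mul_dist_le_dD (hl : TriIneq l) :
    ∃ m > 0, ∀ u v, m * dist u v ≤ dD l u v := by
  have hex := hl.exists_realizes
  obtain ⟨K, hK, hanti⟩ := LinearMap.exists_antilipschitzWith hex.choose
    (LinearMap.ker_eq_bot.2 (hex.choose_spec.injective hl))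
  refine ⟨(K : ℝ)⁻¹, by positivity, fun u v => ?_⟩
  rw [dD, dif_pos hex, inv_mul_le_iff₀ (by positivity)]
  exact hanti.le_mul_dist u v

lemma TriIneqT.exists_pos_mul_dist_le_dD {T : Triangulation S n} {l : Set S → ℝ}
    (hl : TriIneqT T l) :
    ∃ m > 0, ∀ i u v, m * dist u v ≤ dD (lRes T l i) u v := by
  have htri : ∀ i, TriIneq (lRes T l i) := fun i => ⟨hl.1 i, hl.2 i⟩
  choose m hm hmd using fun i => (htri i).exists_pos_mul_dist_le_dD
  obtain ⟨ε, hε, hεm⟩ := Pi.exists_forall_pos_add_lt hm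
  refine ⟨ε, hε, fun i u v => le_trans ?_ (hmd i u v)⟩
  have : ε ≤ m i := by linarith [hεm i]
  gcongr

end TriangleMetric

namespace Triangulation

variable (T : Triangulation S n) (l : Set S → ℝ)

lemma exists_mem_Dtri_apply_eq (x : S) : ∃ i, ∃ p ∈ Dtri, T.σ i p = x := by
  have hx : x ∈ (⋃ i, T.σ i '' V0) ∪ (⋃ i, T.σ i '' Do) ∪ ⋃ i, ⋃ e ∈ E0, T.σ i '' eo e :=
    T.cover ▸ mem_univ x
  simp only [mem_union, mem_iUnion, mem_image] at hx
  rcases hx with (⟨i, p, hp, rfl⟩ | ⟨i, p, hp, rfl⟩) | ⟨i, e, he, p, hp, rfl⟩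
  · exact ⟨i, p, V0_subset_Dtri hp, rfl⟩
  · exact ⟨i, p, interior_subset hp, rfl⟩
  · exact ⟨i, p, subset_Dtri_of_mem_E0 he hp.1, rfl⟩

/-- The set `σᵢ⁻¹(x)` of preimages of `x` in the `i`-th triangle. The maps `σ i` are total
functions on the plane, so the condition `p ∈ Dtri` discards their values outside the triangle. -/
def fiber (x : S) (i : Fin n) : Set E2 := {p | p ∈ Dtri ∧ T.σ i p = x}

lemma finite_fiber (x : S) (i : Fin n) : (T.fiber x i).Finite := by
  have hDo : (T.fiber x i ∩ Do).Subsingleton := fun p hp q hq =>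
    T.inj_int i hp.2 hq.2 (hp.1.2.trans hq.1.2.symm)
  have heo : ∀ e ∈ E0, (T.fiber x i ∩ eo e).Subsingleton := fun e he p hp q hq =>
    T.inj_edge i e he hp.2 hq.2 (hp.1.2.trans hq.1.2.symm)
  refine (finite_V0.union (hDo.finite.union
    (finite_E0.biUnion fun e he => (heo e he).finite))).subset fun p hp => ?_
  rcases mem_V0_or_mem_Do_or_exists_mem_eo hp.1 with hV | hI | ⟨e, he, hE⟩
  · exact .inl hV
  · exact .inr (.inl ⟨hp, hI⟩)
  · exact .inr (.inr (mem_biUnion he ⟨hp, hE⟩))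

section Gluing

variable {T} {i j : Fin n} {p q : E2}

lemma apply_ne_of_mem_V0_of_mem_Do (hp : p ∈ V0) (hq : q ∈ Do) : T.σ i p ≠ T.σ j q := fun h =>
  disjoint_left.1 (T.disj_vert_int j) (mem_iUnion.2 ⟨i, mem_image_of_mem _ hp⟩)
    (h ▸ mem_image_of_mem _ hq)

lemma apply_ne_of_mem_V0_of_mem_eo {e : Set E2} (he : e ∈ E0) (hp : p ∈ V0) (hq : q ∈ eo e) :
    T.σ i p ≠ T.σ j q := fun h =>
  disjoint_left.1 (T.disj_vert_edge j e he) (mem_iUnion.2 ⟨i, mem_image_of_mem _ hp⟩)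
    (h ▸ mem_image_of_mem _ hq)

lemma apply_ne_of_mem_Do_of_mem_eo {e : Set E2} (he : e ∈ E0) (hp : p ∈ Do) (hq : q ∈ eo e) :
    T.σ i p ≠ T.σ j q := fun h =>
  disjoint_left.1 (T.disj_int_edge i j e he) (mem_image_of_mem _ hp) (h ▸ mem_image_of_mem _ hq)

lemma eq_and_eq_of_mem_Do (hp : p ∈ Do) (hq : q ∈ Do) (hpq : T.σ i p = T.σ j q) :
    i = j ∧ p = q := by
  have hij : i = j := by
    by_contra hne
    exact disjoint_left.1 (T.disj_int i j hne) (mem_image_of_mem _ hp)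
      (hpq ▸ mem_image_of_mem _ hq)
  subst hij
  exact ⟨rfl, T.inj_int i hp hq hpq⟩

lemma exists_affineMap_of_mem_eo {e e' : Set E2} (he : e ∈ E0) (he' : e' ∈ E0) (hp : p ∈ eo e)
    (hq : q ∈ eo e') (hpq : T.σ i p = T.σ j q) :
    ∃ A : E2 →ᵃ[ℝ] E2, A '' e' = e ∧ A q = p ∧ ∀ z ∈ e', T.σ i (A z) = T.σ j z := by
  have himage : T.σ j '' eo e' = T.σ i '' eo e := by
    refine (T.edge_eq_or_disjoint j i e' he' e he).resolve_right fun hdisj => ?_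
    exact disjoint_left.1 hdisj (mem_image_of_mem _ hq) (hpq ▸ mem_image_of_mem _ hp)
  obtain ⟨A, hA, hAσ⟩ := T.glue j i e' he' e he himage
  have hAq : A q ∈ eo e := ⟨hA ▸ mem_image_of_mem _ hq.1, fun hV =>
    apply_ne_of_mem_V0_of_mem_eo he' hV hq (hAσ q hq.1)⟩
  exact ⟨A, hA, T.inj_edge i e he hAq hp ((hAσ q hq.1).trans hpq.symm), hAσ⟩

lemma exists_isometric_gluing (hp : p ∈ Dtri) (hq : q ∈ Dtri) (hpq : T.σ i p = T.σ j q) :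
    ∃ C ∈ closedFaces, q ∈ C ∧ ∃ g : E2 → E2, MapsTo g C Dtri ∧
      (∀ z ∈ C, T.σ i (g z) = T.σ j z) ∧ ∀ z ∈ C, dist p (g z) = dist q z := by
  rcases mem_V0_or_mem_Do_or_exists_mem_eo hq with hqV | hqI | ⟨e', he', hqE⟩
  · exact ⟨{q}, .inr (.inr ⟨q, hqV, rfl⟩), rfl, fun _ => p, fun _ _ => hp,
      by simpa using hpq, by simp⟩
  · rcases mem_V0_or_mem_Do_or_exists_mem_eo hp with hpV | hpI | ⟨e, he, hpE⟩
    · exact absurd hpq (apply_ne_of_mem_V0_of_mem_Do hpV hqI)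
    · obtain ⟨rfl, rfl⟩ := eq_and_eq_of_mem_Do hpI hqI hpq
      exact ⟨Dtri, .inl rfl, hq, id, mapsTo_id _, fun _ _ => rfl, fun _ _ => rfl⟩
    · exact absurd hpq.symm (apply_ne_of_mem_Do_of_mem_eo he hqI hpE)
  · rcases mem_V0_or_mem_Do_or_exists_mem_eo hp with hpV | hpI | ⟨e, he, hpE⟩
    · exact absurd hpq (apply_ne_of_mem_V0_of_mem_eo he' hpV hqE)
    · exact absurd hpq (apply_ne_of_mem_Do_of_mem_eo he' hpI hqE)
    · obtain ⟨A, hA, rfl, hAσ⟩ := exists_affineMap_of_mem_eo he he' hpE hqE hpq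
      exact ⟨e', .inr (.inl he'), hqE.1, A,
        fun z hz => subset_Dtri_of_mem_E0 he (hA ▸ mem_image_of_mem _ hz), hAσ,
        fun z hz => dist_map_eq_of_image_edge_eq he' he hA hqE.1 hz⟩

end Gluing

section FiberRadius

/-- `r` is so small that a closed face of `Dtri` coming within distance `r` of a preimage of `x`
contains that preimage; hence gluing maps carry nearby preimages of `x` to preimages of `x`. -/
def IsFiberRadius (x : S) (r : ℝ) : Prop :=
  ∀ i, ∀ f ∈ T.fiber x i, ∀ C ∈ closedFaces, ∀ q ∈ C, dist q f < r → f ∈ C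

lemma exists_isFiberRadius (x : S) : ∃ r > 0, T.IsFiberRadius x r := by
  obtain ⟨r, hr, hrF⟩ := exists_pos_forall_dist_lt_imp_mem (finite_iUnion (T.finite_fiber x))
    finite_closedFaces fun _ => isClosed_of_mem_closedFaces
  exact ⟨r, hr, fun i f hf => hrF f (mem_iUnion_of_mem i hf)⟩

variable {T} {x : S} {r : ℝ}

lemma IsFiberRadius.exists_mem_fiber_dist_eq (hr : T.IsFiberRadius x r) {i j : Fin n} {p q f : E2}
    (hp : p ∈ Dtri) (hq : q ∈ Dtri) (hpq : T.σ i p = T.σ j q) (hf : f ∈ T.fiber x j)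
    (hqf : dist q f < r) : ∃ f' ∈ T.fiber x i, dist p f' = dist q f := by
  obtain ⟨C, hC, hqC, g, hgD, hgσ, hgdist⟩ := exists_isometric_gluing hp hq hpq
  have hfC : f ∈ C := hr j f hf C hC q hqC hqf
  exact ⟨g f, ⟨hgD hfC, (hgσ f hfC).trans hf.2⟩, hgdist f hfC⟩

end FiberRadius

section Chains

lemma exists_dTri_eq_dD {i : Fin n} {u v : S} (hu : u ∈ T.σ i '' Dtri) (hv : v ∈ T.σ i '' Dtri) :
    ∃ a ∈ T.fiber u i, ∃ b ∈ T.fiber v i, dTri T l i u v = dD (lRes T l i) a b := by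
  have himage : {t | ∃ a ∈ Dtri, ∃ b ∈ Dtri, T.σ i a = u ∧ T.σ i b = v ∧ t = dD (lRes T l i) a b} =
      image2 (dD (lRes T l i)) (T.fiber u i) (T.fiber v i) := by
    ext t
    simp only [fiber, mem_image2, mem_ofPred_eq]
    grind
  have hu : (T.fiber u i).Nonempty := hu
  have hv : (T.fiber v i).Nonempty := hv
  obtain ⟨a, ha, b, hb, hab⟩ := (hu.image2 (f := dD (lRes T l i)) hv).csInf_mem
    ((T.finite_fiber u i).image2 _ (T.finite_fiber v i))
  exact ⟨a, ha, b, hb, by rw [dTri, himage, hab]⟩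

variable {T l}

lemma IsFiberRadius.exists_mem_fiber_mul_dist_le_sum {m r : ℝ} (hm : 0 < m)
    (hmd : ∀ i u v, m * dist u v ≤ dD (lRes T l i) u v) {c : ℕ → S}
    (hr : T.IsFiberRadius (c 0) r) {idx : ℕ → Fin n} {k : ℕ}
    (hc : ∀ j < k, c j ∈ T.σ (idx j) '' Dtri ∧ c (j + 1) ∈ T.σ (idx j) '' Dtri)
    (hsum : ∑ j ∈ Finset.range k, dTri T l (idx j) (c j) (c (j + 1)) < m * r)
    {i : Fin n} {p : E2} (hp : p ∈ T.fiber (c k) i) :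
    ∃ f ∈ T.fiber (c 0) i,
      m * dist p f ≤ ∑ j ∈ Finset.range k, dTri T l (idx j) (c j) (c (j + 1)) := by
  induction k generalizing i p with
  | zero => exact ⟨p, hp, by simp⟩
  | succ k ih =>
    rw [Finset.sum_range_succ] at hsum ⊢
    obtain ⟨hu, hv⟩ := hc k k.lt_succ_self
    obtain ⟨a, ha, b, hb, hab⟩ := T.exists_dTri_eq_dD l hu hv
    have hstep : m * dist b a ≤ dTri T l (idx k) (c k) (c (k + 1)) := by
      rw [hab, dist_comm]
      exact hmd _ a b
    have hstep_nonneg : 0 ≤ dTri T l (idx k) (c k) (c (k + 1)) := hab ▸ dD_nonneg _ _ _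
    obtain ⟨f, hf, haf⟩ := ih (fun j hj => hc j (hj.trans k.lt_succ_self))
      (by linarith) ha
    have hbf : m * dist b f ≤ ∑ j ∈ Finset.range k, dTri T l (idx j) (c j) (c (j + 1)) +
        dTri T l (idx k) (c k) (c (k + 1)) :=
      calc m * dist b f ≤ m * (dist b a + dist a f) := by gcongr; exact dist_triangle _ _ _
        _ ≤ _ := by linarith
    obtain ⟨f', hf', hpf'⟩ := hr.exists_mem_fiber_dist_eq hp.1 hb.1 (hp.2.trans hb.2.symm) hf
      (lt_of_mul_lt_mul_left (hbf.trans_lt hsum) hm.le)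
    exact ⟨f', hf', hpf' ▸ hbf⟩

lemma chainSums_nonempty_of_mem_image {x y z : S} {i : Fin n} (hxy : (chainSums T l x y).Nonempty)
    (hy : y ∈ T.σ i '' Dtri) (hz : z ∈ T.σ i '' Dtri) : (chainSums T l x z).Nonempty := by
  obtain ⟨-, k, c, idx, hc0, hck, hc, -⟩ := hxy
  refine ⟨_, k + 1, fun j => if j ≤ k then c j else z, fun j => if j < k then idx j else i,
    by simpa using hc0, by simp, fun j hj => ?_, rfl⟩
  rcases Nat.lt_succ_iff_lt_or_eq.1 hj with hjk | rfl
  · simpa [hjk, hjk.le, Nat.succ_le_of_lt hjk] using hc j hjk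
  · simp [hck, hy, hz]

variable (T l) in
lemma chainSums_nonempty [T2Space S] [PreconnectedSpace S] (x y : S) :
    (chainSums T l x y).Nonempty := by
  have hclosed : ∀ i, IsClosed (T.σ i '' Dtri) := fun i =>
    (isCompact_Dtri.image_of_continuousOn (T.continuousOn i)).isClosed
  have hself : (chainSums T l x x).Nonempty := by
    obtain ⟨i, -⟩ := T.exists_mem_Dtri_apply_eq x
    exact ⟨0, 0, fun _ => x, fun _ => i, rfl, rfl, by simp, by simp⟩
  have huniv : {z | (chainSums T l x z).Nonempty} = univ :=
    eq_univ_of_finite_closed_cover hclosed T.exists_mem_Dtri_apply_eq ⟨x, hself⟩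
      fun i u hu v hv hxu => chainSums_nonempty_of_mem_image hxu hu hv
  exact huniv.ge (mem_univ y)

end Chains

end Triangulation

theorem dGlue_eq_zero_imp_eq_general (T : Triangulation S n) (l : Set S → ℝ) (hl : TriIneqT T l)
    (x y : S) (hxy : (chainSums T l x y).Nonempty) (h : dGlue T l x y = 0) : x = y := by
  obtain ⟨m, hm, hmd⟩ := hl.exists_pos_mul_dist_le_dD
  obtain ⟨r, hr, hrx⟩ := T.exists_isFiberRadius x
  obtain ⟨i, p, hp⟩ := T.exists_mem_Dtri_apply_eq y
  have hclose : ∀ ε > 0, ∃ f ∈ T.fiber x i, dist p f < ε := by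
    intro ε hε
    obtain ⟨s, ⟨k, c, idx, rfl, rfl, hc, rfl⟩, hs⟩ :=
      exists_lt_of_csInf_lt hxy (h.trans_lt (by positivity : 0 < m * min r ε))
    obtain ⟨f, hf, hpf⟩ := hrx.exists_mem_fiber_mul_dist_le_sum hm hmd hc
      (hs.trans_le (by gcongr; exact min_le_left r ε)) hp
    exact ⟨f, hf, (lt_of_mul_lt_mul_left (hpf.trans_lt hs) hm.le).trans_le (min_le_right r ε)⟩
  have hpx : p ∈ T.fiber x i :=
    (T.finite_fiber x i).isClosed.closure_subset (Metric.mem_closure_iff.2 hclose)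
  exact hpx.2.symm.trans hp.2

/-- for all `x, y ∈ S`, if `d[l](x,y) = 0` then `x = y`. -/
theorem dGlue_eq_zero_imp_eq
    {S : Type} [TopologicalSpace S] [CompactSpace S] [T2Space S] [ConnectedSpace S]
    {n : ℕ} (T : Triangulation S n) (l : Set S → ℝ) (hl : TriIneqT T l) :
    ∀ x y : S, dGlue T l x y = 0 → x = y :=
  fun x y => dGlue_eq_zero_imp_eq_general T l hl x y (T.chainSums_nonempty l x y)
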